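/- arXiv:2404.03578 — 3 statements merged into one kernel-verified Lean document; each statement's English description precedes it below -/
import Mathlib

section
/- (Robust Bellman equation.) In an S×A-rectangular RMDP, for every Markov policy π, every step h ∈ {1, …, H}, and every (s,a) ∈ S×A: V^π_h(s) = ∑_{a∈A} π_h(a|s)·Q^π_h(s,a), and Q^π_h(s,a) = R_h(s,a) + inf_{P̃ ∈ 𝒫(s,a;P_h)} E_{P̃}[V^π_{h+1}], where V^π_{H+1} ≡ 0. In other words, the infimum over entire admissible kernel collections in the definition of the robust value functions can be computed by the stepwise backward recursion. -/
/-!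
Write `bellQ h s a` for the one-step quantity `R h s a + inf_{p ∈ Rob h s a} E_p[V^π_{h+1}]`.
Every admissible kernel collection has `kerQ ≥ bellQ`, because `kerV ≥ V^π` pointwise and
expectations under distributions are monotone (`bellQ_le_kerQ`). Conversely, rectangularity lets
one choose the kernel at step `h` independently for each `(s, a)` and independently of the later
kernels, so gluing near-minimisers of the one-step problem onto a collection that is near-optimal
from step `h + 1` on gives a single admissible collection with `kerQ ≤ bellQ + ε` for all `(s, a)`
simultaneously (`exists_kerQ_le`). The uniformity in the state is what lets the near-optimality of
the later kernels pass through the expectation; it is itself propagated by backward induction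
(`exists_kerV_le`). Both Bellman identities follow by letting `ε → 0`.
-/

open Finset

section RMDPDefs

variable {S A : Type*} [Fintype S] [Fintype A]

/-- `p` is a probability distribution on the finite set `S`. -/
def IsDist (p : S → ℝ) : Prop := (∀ s, 0 ≤ p s) ∧ ∑ s, p s = 1

/-- Expectation of `f` under `p`. -/
def Eexp (p f : S → ℝ) : ℝ := ∑ s, p s * f s

/-- Total-variation distance between `p` and `q` (no absolute continuity assumed). -/
noncomputable def TV (p q : S → ℝ) : ℝ := (∑ s, |p s - q s|) / 2

/-- Value function `V^{π,P̃}_h` of a Markov policy `π` under the kernel collection `Pk`,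
defined by the backward recursion `V_{H+1} ≡ 0`,
`V_h(s) = ∑_a π_h(a|s) (R_h(s,a) + E_{P̃_h(·|s,a)}[V_{h+1}])`. -/
noncomputable def kerV (H : ℕ) (R : ℕ → S → A → ℝ) (Pk : ℕ → S → A → S → ℝ)
    (π : ℕ → S → A → ℝ) (h : ℕ) : S → ℝ := fun s =>
  if _hle : H + 1 ≤ h then 0
  else ∑ a : A, π h s a * (R h s a + Eexp (Pk h s a) (kerV H R Pk π (h + 1)))
termination_by H + 1 - h
decreasing_by omega

/-- State-action value function `Q^{π,P̃}_h` of `π` under the kernel collection `Pk`. -/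
noncomputable def kerQ (H : ℕ) (R : ℕ → S → A → ℝ) (Pk : ℕ → S → A → S → ℝ)
    (π : ℕ → S → A → ℝ) (h : ℕ) (s : S) (a : A) : ℝ :=
  R h s a + Eexp (Pk h s a) (kerV H R Pk π (h + 1))

/-- A kernel collection is admissible if each of its kernels lies in the corresponding
robust set (S×A-rectangularity). -/
def Admissible (H : ℕ) (Rob : ℕ → S → A → Set (S → ℝ))
    (Pk : ℕ → S → A → S → ℝ) : Prop :=
  ∀ h s a, 1 ≤ h → h ≤ H → Pk h s a ∈ Rob h s a

/-- Robust value function `V^π_h(s)`: infimum over admissible kernel collections. -/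
noncomputable def robV (H : ℕ) (R : ℕ → S → A → ℝ) (Rob : ℕ → S → A → Set (S → ℝ))
    (π : ℕ → S → A → ℝ) (h : ℕ) (s : S) : ℝ :=
  sInf {x : ℝ | ∃ Pk : ℕ → S → A → S → ℝ, Admissible H Rob Pk ∧ x = kerV H R Pk π h s}

/-- Robust state-action value function `Q^π_h(s,a)`. -/
noncomputable def robQ (H : ℕ) (R : ℕ → S → A → ℝ) (Rob : ℕ → S → A → Set (S → ℝ))
    (π : ℕ → S → A → ℝ) (h : ℕ) (s : S) (a : A) : ℝ :=
  sInf {x : ℝ | ∃ Pk : ℕ → S → A → S → ℝ, Admissible H Rob Pk ∧ x = kerQ H R Pk π h s a}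

/-- `π` is a Markov policy for horizon `H`. -/
def IsPolicy (H : ℕ) (π : ℕ → S → A → ℝ) : Prop :=
  ∀ h s, 1 ≤ h → h ≤ H → IsDist (π h s)

/-- Optimal robust value function `V*_h(s) = sup_π V^π_h(s)`. -/
noncomputable def optV (H : ℕ) (R : ℕ → S → A → ℝ) (Rob : ℕ → S → A → Set (S → ℝ))
    (h : ℕ) (s : S) : ℝ :=
  sSup {x : ℝ | ∃ π : ℕ → S → A → ℝ, IsPolicy H π ∧ x = robV H R Rob π h s}

/-- Optimal robust state-action value function `Q*_h(s,a) = sup_π Q^π_h(s,a)`. -/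
noncomputable def optQ (H : ℕ) (R : ℕ → S → A → ℝ) (Rob : ℕ → S → A → Set (S → ℝ))
    (h : ℕ) (s : S) (a : A) : ℝ :=
  sSup {x : ℝ | ∃ π : ℕ → S → A → ℝ, IsPolicy H π ∧ x = robQ H R Rob π h s a}

/-- The total-variation robust sets `𝒫_ρ(s,a;P_h)` of radius `ρ` around the nominal
kernels `P`. -/
def TVset (ρ : ℝ) (P : ℕ → S → A → S → ℝ) : ℕ → S → A → Set (S → ℝ) :=
  fun h s a => {Pt : S → ℝ | IsDist Pt ∧ TV Pt (P h s a) ≤ ρ}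

open Classical in
/-- The Markov policy induced by a deterministic policy. -/
noncomputable def detPol (πd : ℕ → S → A) : ℕ → S → A → ℝ :=
  fun h s a => if a = πd h s then 1 else 0

end RMDPDefs

section RobustBellman

variable {S A : Type*} [Fintype S] [Fintype A]

lemma Eexp_mono {p f g : S → ℝ} (hp : IsDist p) (hfg : ∀ s, f s ≤ g s) :
    Eexp p f ≤ Eexp p g :=
  Finset.sum_le_sum fun s _ => mul_le_mul_of_nonneg_left (hfg s) (hp.1 s)

lemma Eexp_nonneg {p f : S → ℝ} (hp : IsDist p) (hf : ∀ s, 0 ≤ f s) : 0 ≤ Eexp p f :=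
  Finset.sum_nonneg fun s _ => mul_nonneg (hp.1 s) (hf s)

lemma Eexp_add_const {p : S → ℝ} (hp : IsDist p) (f : S → ℝ) (c : ℝ) :
    Eexp p (fun s => f s + c) = Eexp p f + c := by
  simp only [Eexp, mul_add, Finset.sum_add_distrib, ← Finset.sum_mul, hp.2, one_mul]

lemma kerV_of_lt {H : ℕ} (R : ℕ → S → A → ℝ) (Pk : ℕ → S → A → S → ℝ) (π : ℕ → S → A → ℝ)
    {h : ℕ} (hh : H < h) (s : S) : kerV H R Pk π h s = 0 := by
  rw [kerV, dif_pos (by omega)]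

lemma kerV_of_le {H : ℕ} (R : ℕ → S → A → ℝ) (Pk : ℕ → S → A → S → ℝ) (π : ℕ → S → A → ℝ)
    {h : ℕ} (hh : h ≤ H) (s : S) :
    kerV H R Pk π h s = Eexp (π h s) (kerQ H R Pk π h s) := by
  rw [kerV, dif_neg (by omega)]
  rfl

/-- The value at step `h` depends only on the kernels at steps `≥ h`. -/
lemma kerV_congr {H : ℕ} (R : ℕ → S → A → ℝ) {Pk Pk' : ℕ → S → A → S → ℝ}
    (π : ℕ → S → A → ℝ) {h : ℕ} (hP : ∀ i, h ≤ i → Pk i = Pk' i) :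
    kerV H R Pk π h = kerV H R Pk' π h := by
  by_cases hh : h ≤ H
  · have ih : kerV H R Pk π (h + 1) = kerV H R Pk' π (h + 1) :=
      kerV_congr R π fun i hi => hP i (by omega)
    funext s
    simp only [kerV_of_le R _ π hh, Eexp, kerQ, ih, hP h le_rfl]
  · funext s
    rw [kerV_of_lt R _ π (by omega), kerV_of_lt R _ π (by omega)]
termination_by H + 1 - h

/-- The standing assumptions on the model and the policy `π`. -/
structure RMDPData (H : ℕ) (R : ℕ → S → A → ℝ) (Rob : ℕ → S → A → Set (S → ℝ))
    (π : ℕ → S → A → ℝ) : Prop where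
  reward_nonneg : ∀ h s a, 1 ≤ h → h ≤ H → 0 ≤ R h s a
  nonempty : ∀ h s a, 1 ≤ h → h ≤ H → (Rob h s a).Nonempty
  isDist : ∀ h s a, 1 ≤ h → h ≤ H → ∀ p ∈ Rob h s a, IsDist p
  policy : IsPolicy H π

/-- The right-hand side of the robust Bellman equation for `Q`:
`R_h(s,a) + inf_{p ∈ Rob h s a} E_p[V^π_{h+1}]`. -/
noncomputable def bellQ (H : ℕ) (R : ℕ → S → A → ℝ) (Rob : ℕ → S → A → Set (S → ℝ))
    (π : ℕ → S → A → ℝ) (h : ℕ) (s : S) (a : A) : ℝ :=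
  R h s a + sInf {x : ℝ | ∃ Pt ∈ Rob h s a, x = Eexp Pt (robV H R Rob π (h + 1))}

variable {H : ℕ} {R : ℕ → S → A → ℝ} {Rob : ℕ → S → A → Set (S → ℝ)} {π : ℕ → S → A → ℝ}

lemma kerV_nonneg (D : RMDPData H R Rob π) {Pk : ℕ → S → A → S → ℝ}
    (hPk : Admissible H Rob Pk) {h : ℕ} (h1 : 1 ≤ h) (s : S) : 0 ≤ kerV H R Pk π h s := by
  by_cases hh : h ≤ H
  · have ih : ∀ s', 0 ≤ kerV H R Pk π (h + 1) s' := kerV_nonneg D hPk (by omega)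
    rw [kerV_of_le R _ π hh]
    exact Eexp_nonneg (D.policy h s h1 hh) fun a => add_nonneg (D.reward_nonneg h s a h1 hh)
      (Eexp_nonneg (D.isDist h s a h1 hh _ (hPk h s a h1 hh)) ih)
  · rw [kerV_of_lt R _ π (by omega)]
termination_by H + 1 - h

lemma robV_nonneg (D : RMDPData H R Rob π) {h : ℕ} (h1 : 1 ≤ h) (s : S) :
    0 ≤ robV H R Rob π h s := by
  apply Real.sInf_nonneg
  rintro x ⟨Pk, hPk, rfl⟩
  exact kerV_nonneg D hPk h1 s

lemma robV_le_kerV (D : RMDPData H R Rob π) {Pk : ℕ → S → A → S → ℝ}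
    (hPk : Admissible H Rob Pk) {h : ℕ} (h1 : 1 ≤ h) (s : S) :
    robV H R Rob π h s ≤ kerV H R Pk π h s := by
  refine csInf_le ⟨0, ?_⟩ ⟨Pk, hPk, rfl⟩
  rintro x ⟨Pk', hPk', rfl⟩
  exact kerV_nonneg D hPk' h1 s

lemma bellQ_le_kerQ (D : RMDPData H R Rob π) {Pk : ℕ → S → A → S → ℝ}
    (hPk : Admissible H Rob Pk) {h : ℕ} (h1 : 1 ≤ h) (hh : h ≤ H) (s : S) (a : A) :
    bellQ H R Rob π h s a ≤ kerQ H R Pk π h s a := by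
  have hmem := hPk h s a h1 hh
  refine add_le_add le_rfl (le_trans (csInf_le ⟨0, ?_⟩ ⟨_, hmem, rfl⟩)
    (Eexp_mono (D.isDist h s a h1 hh _ hmem) fun s' => robV_le_kerV D hPk (by omega) s'))
  rintro x ⟨p, hp, rfl⟩
  exact Eexp_nonneg (D.isDist h s a h1 hh p hp) fun s' => robV_nonneg D (by omega) s'

/-- Gluing step: near-minimisers of the one-step problems at step `h`, chosen separately for each
`(s, a)`, combine with a collection near-optimal from step `h + 1` on. -/
lemma exists_kerQ_le (D : RMDPData H R Rob π) {h : ℕ} (h1 : 1 ≤ h) (hh : h ≤ H)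
    (hnext : ∀ ε > 0, ∃ Pk, Admissible H Rob Pk ∧
      ∀ s, kerV H R Pk π (h + 1) s ≤ robV H R Rob π (h + 1) s + ε)
    {ε : ℝ} (hε : 0 < ε) :
    ∃ Pk, Admissible H Rob Pk ∧
      ∀ s a, kerQ H R Pk π h s a ≤ bellQ H R Rob π h s a + ε := by
  obtain ⟨Pk, hPk, hV⟩ := hnext (ε / 2) (by positivity)
  have hp : ∀ s a, ∃ p ∈ Rob h s a, Eexp p (robV H R Rob π (h + 1)) <
      sInf {x : ℝ | ∃ Pt ∈ Rob h s a, x = Eexp Pt (robV H R Rob π (h + 1))} + ε / 2 := by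
    intro s a
    obtain ⟨q, hq⟩ := D.nonempty h s a h1 hh
    obtain ⟨x, ⟨p, hp, rfl⟩, hlt⟩ := Real.lt_sInf_add_pos
      (s := {x : ℝ | ∃ Pt ∈ Rob h s a, x = Eexp Pt (robV H R Rob π (h + 1))})
      ⟨_, q, hq, rfl⟩ (half_pos hε)
    exact ⟨p, hp, hlt⟩
  choose p hpmem hplt using hp
  refine ⟨Function.update Pk h p, ?_, ?_⟩
  · intro i s a hi1 hi
    by_cases hih : i = h
    · subst hih
      simpa using hpmem s a
    · simpa [Function.update_of_ne hih] using hPk i s a hi1 hi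
  · intro s a
    have hc : kerV H R (Function.update Pk h p) π (h + 1) = kerV H R Pk π (h + 1) :=
      kerV_congr R π fun i hi => Function.update_of_ne (by omega) _ _
    have hd := D.isDist h s a h1 hh _ (hpmem s a)
    have hE := Eexp_mono hd hV
    rw [Eexp_add_const hd] at hE
    have := hplt s a
    simp only [kerQ, bellQ, hc, Function.update_self]
    linarith

/-- Averaging over `π_h(·|s)` turns an `ε`-bound on `kerQ` that is uniform in the action into an
`ε`-bound on `kerV`. -/
lemma kerV_le_of_kerQ_le (D : RMDPData H R Rob π) {Pk : ℕ → S → A → S → ℝ} {h : ℕ}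
    (h1 : 1 ≤ h) (hh : h ≤ H) {ε : ℝ}
    (hQ : ∀ s a, kerQ H R Pk π h s a ≤ bellQ H R Rob π h s a + ε) (s : S) :
    kerV H R Pk π h s ≤ Eexp (π h s) (bellQ H R Rob π h s) + ε := by
  have hd := D.policy h s h1 hh
  rw [kerV_of_le R _ π hh, ← Eexp_add_const hd]
  exact Eexp_mono hd (hQ s)

lemma exists_admissible (D : RMDPData H R Rob π) : ∃ Pk, Admissible H Rob Pk := by
  have : ∀ h s a, ∃ p : S → ℝ, 1 ≤ h → h ≤ H → p ∈ Rob h s a := by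
    intro h s a
    by_cases hc : 1 ≤ h ∧ h ≤ H
    · obtain ⟨p, hp⟩ := D.nonempty h s a hc.1 hc.2
      exact ⟨p, fun _ _ => hp⟩
    · exact ⟨0, fun h1 h2 => absurd ⟨h1, h2⟩ hc⟩
  choose Pk hPk using this
  exact ⟨Pk, hPk⟩

lemma Eexp_bellQ_le_robV (D : RMDPData H R Rob π) {h : ℕ} (h1 : 1 ≤ h) (hh : h ≤ H) (s : S) :
    Eexp (π h s) (bellQ H R Rob π h s) ≤ robV H R Rob π h s := by
  obtain ⟨Pk₀, hPk₀⟩ := exists_admissible D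
  refine le_csInf ⟨_, Pk₀, hPk₀, rfl⟩ ?_
  rintro x ⟨Pk, hPk, rfl⟩
  rw [kerV_of_le R _ π hh]
  exact Eexp_mono (D.policy h s h1 hh) fun a => bellQ_le_kerQ D hPk h1 hh s a

/-- Some admissible collection is `ε`-optimal at step `h` simultaneously for all states. -/
lemma exists_kerV_le (D : RMDPData H R Rob π) {h : ℕ} (h1 : 1 ≤ h) (ε : ℝ) (hε : 0 < ε) :
    ∃ Pk, Admissible H Rob Pk ∧ ∀ s, kerV H R Pk π h s ≤ robV H R Rob π h s + ε := by
  by_cases hh : h ≤ H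
  · obtain ⟨Pk, hPk, hQ⟩ := exists_kerQ_le D h1 hh
      (fun δ hδ => exists_kerV_le D (h := h + 1) (by omega) δ hδ) hε
    refine ⟨Pk, hPk, fun s => ?_⟩
    have hV := kerV_le_of_kerQ_le D h1 hh hQ s
    have hle := Eexp_bellQ_le_robV D h1 hh s
    linarith
  · obtain ⟨Pk, hPk⟩ := exists_admissible D
    refine ⟨Pk, hPk, fun s => ?_⟩
    rw [kerV_of_lt R _ π (by omega)]
    have := robV_nonneg D h1 s
    linarith
termination_by H + 1 - h

lemma robQ_eq_bellQ (D : RMDPData H R Rob π) {h : ℕ} (h1 : 1 ≤ h) (hh : h ≤ H) (s : S) (a : A) :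
    robQ H R Rob π h s a = bellQ H R Rob π h s a := by
  have hlb : ∀ x ∈ {x : ℝ | ∃ Pk : ℕ → S → A → S → ℝ,
      Admissible H Rob Pk ∧ x = kerQ H R Pk π h s a}, bellQ H R Rob π h s a ≤ x := by
    rintro x ⟨Pk, hPk, rfl⟩
    exact bellQ_le_kerQ D hPk h1 hh s a
  apply le_antisymm
  · refine le_of_forall_pos_le_add fun ε hε => ?_
    obtain ⟨Pk, hPk, hQ⟩ := exists_kerQ_le D h1 hh (exists_kerV_le D (by omega)) hε
    exact (csInf_le ⟨_, hlb⟩ ⟨Pk, hPk, rfl⟩).trans (hQ s a)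
  · obtain ⟨Pk₀, hPk₀⟩ := exists_admissible D
    exact le_csInf ⟨_, Pk₀, hPk₀, rfl⟩ hlb

lemma robV_eq_Eexp_bellQ (D : RMDPData H R Rob π) {h : ℕ} (h1 : 1 ≤ h) (hh : h ≤ H) (s : S) :
    robV H R Rob π h s = Eexp (π h s) (bellQ H R Rob π h s) := by
  refine le_antisymm (le_of_forall_pos_le_add fun ε hε => ?_) (Eexp_bellQ_le_robV D h1 hh s)
  obtain ⟨Pk, hPk, hQ⟩ := exists_kerQ_le D h1 hh (exists_kerV_le D (by omega)) hε
  exact (robV_le_kerV D hPk h1 s).trans (kerV_le_of_kerQ_le D h1 hh hQ s)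

end RobustBellman

/-- **Robust Bellman equation.** In an S×A-rectangular RMDP, for every Markov policy `π`,
every step `h ∈ {1,…,H}` and every `(s,a)`:
`V^π_h(s) = ∑_a π_h(a|s)·Q^π_h(s,a)` and
`Q^π_h(s,a) = R_h(s,a) + inf_{P̃ ∈ 𝒫(s,a;P_h)} E_{P̃}[V^π_{h+1}]`. -/
theorem robust_bellman_equation {S A : Type*} [Fintype S] [Fintype A] [Nonempty S] [Nonempty A]
    (H : ℕ) (hH : 1 ≤ H)
    (R : ℕ → S → A → ℝ) (hR : ∀ h s a, 1 ≤ h → h ≤ H → 0 ≤ R h s a ∧ R h s a ≤ 1)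
    (Rob : ℕ → S → A → Set (S → ℝ))
    (hRobNE : ∀ h s a, 1 ≤ h → h ≤ H → (Rob h s a).Nonempty)
    (hRobDist : ∀ h s a, 1 ≤ h → h ≤ H → ∀ p ∈ Rob h s a, IsDist p)
    (π : ℕ → S → A → ℝ) (hπ : IsPolicy H π) :
    ∀ h, 1 ≤ h → h ≤ H → ∀ (s : S) (a : A),
      robV H R Rob π h s = ∑ a' : A, π h s a' * robQ H R Rob π h s a' ∧
      robQ H R Rob π h s a
        = R h s a + sInf {x : ℝ | ∃ Pt ∈ Rob h s a, x = Eexp Pt (robV H R Rob π (h + 1))} := by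
  intro h h1 hh s a
  have D : RMDPData H R Rob π := ⟨fun h s a h1 hh => (hR h s a h1 hh).1, hRobNE, hRobDist, hπ⟩
  refine ⟨?_, robQ_eq_bellQ D h1 hh s a⟩
  simp only [robQ_eq_bellQ D h1 hh]
  exact robV_eq_Eexp_bellQ D h1 hh s
end

section
/- (Gap between maximum and minimum of robust values for TV robust sets.) Consider an RMDP whose robust sets are the TV robust sets of radius ρ ∈ (0,1), i.e., 𝒫(s,a;P_h) = 𝒫_ρ(s,a;P_h), for an arbitrary collection of nominal kernels P = {P_h}_{h=1}^H. Then for every Markov policy π and every step h ∈ {1,…,H}: max_{(s,a)∈S×A} Q^π_h(s,a) − min_{(s,a)∈S×A} Q^π_h(s,a) ≤ min{H, 1/ρ}, and max_{s∈S} V^π_h(s) − min_{s∈S} V^π_h(s) ≤ min{H, 1/ρ}. -/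
/-!
Each TV robust set is compact and expectations are continuous, so the worst-case transition at
`(h, s, a)` against a given next-step value function is attained (`exists_minimizer`). Choosing
these minimizers backwards in time gives a single admissible kernel collection that attains the
infima defining `robV` and `robQ` at all states, actions and steps at once (`exists_worst`), and
the theorem becomes a statement about the values under that collection.

For those values, let `s₀` minimize `V_{h+1}` and put `m = V_{h+1}(s₀)`. Since `R ≥ 0`, `Q_h ≥ m`.
The mixture `(1 - ρ) P_h(·|s,a) + ρ δ_{s₀}` lies in the robust set, so
`Q_h ≤ 1 + (1 - ρ) max V_{h+1} + ρ m`. If `max V_{h+1} ≤ m + 1/ρ`, the right side is at most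
`1 + (1 - ρ)(m + 1/ρ) + ρ m = m + 1/ρ`, so `Q_h`, and its `π`-average `V_h`, take values in
`[m, m + 1/ρ]`. Backward induction gives the bound `1/ρ`; the bound `H` holds because all values
lie in `[0, H + 1 - h]`.
-/

open Finset

section RMDPProof

variable {S A : Type*} [Fintype S] [Fintype A]

lemma le_Eexp {p f : S → ℝ} {l : ℝ} (hp : IsDist p) (hf : ∀ s, l ≤ f s) : l ≤ Eexp p f := by
  calc l = ∑ s, p s * l := by rw [← Finset.sum_mul, hp.2, one_mul]
    _ ≤ Eexp p f := Finset.sum_le_sum fun s _ => mul_le_mul_of_nonneg_left (hf s) (hp.1 s)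

lemma Eexp_le {p f : S → ℝ} {u : ℝ} (hp : IsDist p) (hf : ∀ s, f s ≤ u) : Eexp p f ≤ u := by
  calc Eexp p f ≤ ∑ s, p s * u :=
        Finset.sum_le_sum fun s _ => mul_le_mul_of_nonneg_left (hf s) (hp.1 s)
    _ = u := by rw [← Finset.sum_mul, hp.2, one_mul]

lemma kerV_terminal (H : ℕ) (R : ℕ → S → A → ℝ) (Pk : ℕ → S → A → S → ℝ)
    (π : ℕ → S → A → ℝ) {h : ℕ} (hh : H + 1 ≤ h) (s : S) : kerV H R Pk π h s = 0 := by
  rw [kerV]; simp [hh]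

lemma kerV_step (H : ℕ) (R : ℕ → S → A → ℝ) (Pk : ℕ → S → A → S → ℝ)
    (π : ℕ → S → A → ℝ) {h : ℕ} (hh : h ≤ H) (s : S) :
    kerV H R Pk π h s = Eexp (π h s) (kerQ H R Pk π h s) := by
  rw [kerV, dif_neg (by omega)]; rfl

lemma center_mem_TVset {ρ : ℝ} (hρ : 0 ≤ ρ) {P : ℕ → S → A → S → ℝ} {h : ℕ} {s : S} {a : A}
    (hP : IsDist (P h s a)) : P h s a ∈ TVset ρ P h s a :=
  ⟨hP, by simpa [TV] using hρ⟩

lemma exists_minimizer {ρ : ℝ} (hρ : 0 ≤ ρ) {P : ℕ → S → A → S → ℝ} {h : ℕ} {s : S} {a : A}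
    (hP : IsDist (P h s a)) (f : S → ℝ) :
    ∃ p ∈ TVset ρ P h s a, ∀ q ∈ TVset ρ P h s a, Eexp p f ≤ Eexp q f := by
  have hcl : IsClosed {p : S → ℝ | TV p (P h s a) ≤ ρ} := by
    refine isClosed_le ?_ continuous_const
    unfold TV
    fun_prop
  have hc : IsCompact (TVset ρ P h s a) := (isCompact_stdSimplex ℝ S).inter_right hcl
  have hf : Continuous fun p : S → ℝ => Eexp p f := by
    unfold Eexp
    fun_prop
  obtain ⟨p, hp, hmin⟩ := hc.exists_isMinOn ⟨_, center_mem_TVset hρ hP⟩ hf.continuousOn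
  exact ⟨p, hp, fun q hq => hmin hq⟩

/-- Moving mass `ρ` of the nominal distribution to a single state `s₀` stays within the TV ball,
so the worst-case expectation of `f` is at most `(1 - ρ) E_P[f] + ρ f(s₀)`. -/
lemma exists_mixture {ρ : ℝ} (hρ0 : 0 ≤ ρ) (hρ1 : ρ ≤ 1) {P : ℕ → S → A → S → ℝ}
    {h : ℕ} {s : S} {a : A} (hP : IsDist (P h s a)) (f : S → ℝ) (s₀ : S) :
    ∃ p ∈ TVset ρ P h s a, Eexp p f = (1 - ρ) * Eexp (P h s a) f + ρ * f s₀ := by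
  classical
  set q := P h s a with hq
  let d : S → ℝ := fun t => if t = s₀ then 1 else 0
  have hd0 : ∀ t, 0 ≤ d t := fun t => by dsimp only [d]; split_ifs <;> norm_num
  have hd1 : ∑ t, d t = 1 := by simp [d]
  refine ⟨fun t => (1 - ρ) * q t + ρ * d t, ⟨⟨fun t => ?_, ?_⟩, ?_⟩, ?_⟩
  · exact add_nonneg (mul_nonneg (by linarith) (hP.1 t)) (mul_nonneg hρ0 (hd0 t))
  · rw [Finset.sum_add_distrib, ← Finset.mul_sum, ← Finset.mul_sum, hd1, hP.2]; ring
  · rw [← hq]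
    have hle : ∑ t, |(1 - ρ) * q t + ρ * d t - q t| ≤ ∑ t, ρ * (d t + q t) := by
      refine Finset.sum_le_sum fun t _ => ?_
      have h1 : (1 - ρ) * q t + ρ * d t - q t = ρ * (d t - q t) := by ring
      rw [h1, abs_mul, abs_of_nonneg hρ0]
      refine mul_le_mul_of_nonneg_left ?_ hρ0
      have := hd0 t
      have := hP.1 t
      exact abs_le.2 ⟨by linarith, by linarith⟩
    rw [← Finset.mul_sum, Finset.sum_add_distrib, hd1, hP.2] at hle
    unfold TV
    linarith
  · have hs : ∑ t, d t * f t = f s₀ := by simp [d]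
    unfold Eexp
    rw [← hs, Finset.mul_sum, Finset.mul_sum, ← Finset.sum_add_distrib]
    exact Finset.sum_congr rfl fun t _ => by ring

/-- Backward recursion for the values obtained when the transition at `(h, s, a)` is
`g f h s a`, a function of the next-step value function `f`. -/
noncomputable def selV (H : ℕ) (R : ℕ → S → A → ℝ) (g : (S → ℝ) → ℕ → S → A → S → ℝ)
    (π : ℕ → S → A → ℝ) (h : ℕ) : S → ℝ := fun s =>
  if _hle : H + 1 ≤ h then 0
  else ∑ a : A, π h s a * (R h s a +
    Eexp (g (selV H R g π (h + 1)) h s a) (selV H R g π (h + 1)))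
termination_by H + 1 - h
decreasing_by all_goals omega

lemma kerV_selV (H : ℕ) (R : ℕ → S → A → ℝ) (g : (S → ℝ) → ℕ → S → A → S → ℝ)
    (π : ℕ → S → A → ℝ) (k : ℕ) : ∀ h, H + 1 ≤ h + k →
    kerV H R (fun i => g (selV H R g π (i + 1)) i) π h = selV H R g π h := by
  induction k with
  | zero =>
    intro h hh
    funext s
    rw [kerV, selV, dif_pos (by omega), dif_pos (by omega)]
  | succ k ih =>
    intro h hh
    funext s
    rw [kerV, selV, ih (h + 1) (by omega)]

/-- An admissible kernel collection whose transitions minimize the expected next-step value,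
where that value is computed under the collection itself. -/
lemma exists_greedy (H : ℕ) {ρ : ℝ} (hρ : 0 ≤ ρ) (R : ℕ → S → A → ℝ)
    {P : ℕ → S → A → S → ℝ} (hP : ∀ h s a, 1 ≤ h → h ≤ H → IsDist (P h s a))
    (π : ℕ → S → A → ℝ) :
    ∃ K, Admissible H (TVset ρ P) K ∧ ∀ h s a, 1 ≤ h → h ≤ H → ∀ q ∈ TVset ρ P h s a,
      Eexp (K h s a) (kerV H R K π (h + 1)) ≤ Eexp q (kerV H R K π (h + 1)) := by
  have hex : ∀ (f : S → ℝ) (h : ℕ) (s : S) (a : A), ∃ p : S → ℝ, 1 ≤ h → h ≤ H →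
      p ∈ TVset ρ P h s a ∧ ∀ q ∈ TVset ρ P h s a, Eexp p f ≤ Eexp q f := by
    intro f h s a
    by_cases hh : 1 ≤ h ∧ h ≤ H
    · obtain ⟨p, hp, hmin⟩ := exists_minimizer hρ (hP h s a hh.1 hh.2) f
      exact ⟨p, fun _ _ => ⟨hp, hmin⟩⟩
    · exact ⟨0, fun h1 h2 => absurd ⟨h1, h2⟩ hh⟩
  choose g hg using hex
  refine ⟨fun i => g (selV H R g π (i + 1)) i, fun h s a h1 h2 => (hg _ h s a h1 h2).1, ?_⟩
  intro h s a h1 h2 q hq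
  rw [kerV_selV H R g π (H + 1) (h + 1) (by omega)]
  exact (hg _ h s a h1 h2).2 q hq

/-- One admissible kernel collection attains the infima in `robV` and `robQ` simultaneously, and
its transitions are worst-case against its own next-step values (the robust Bellman equation). -/
lemma exists_worst (H : ℕ) {ρ : ℝ} (hρ : 0 ≤ ρ) (R : ℕ → S → A → ℝ)
    {P : ℕ → S → A → S → ℝ} (hP : ∀ h s a, 1 ≤ h → h ≤ H → IsDist (P h s a))
    {π : ℕ → S → A → ℝ} (hπ : IsPolicy H π) :
    ∃ K, Admissible H (TVset ρ P) K ∧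
      (∀ h s a, 1 ≤ h → h ≤ H → ∀ q ∈ TVset ρ P h s a,
        Eexp (K h s a) (kerV H R K π (h + 1)) ≤ Eexp q (kerV H R K π (h + 1))) ∧
      (∀ h s a, 1 ≤ h → h ≤ H → robQ H R (TVset ρ P) π h s a = kerQ H R K π h s a) ∧
      (∀ h s, 1 ≤ h → h ≤ H → robV H R (TVset ρ P) π h s = kerV H R K π h s) := by
  obtain ⟨K, hK, hmin⟩ := exists_greedy H hρ R hP π
  have hQstep : ∀ L, Admissible H (TVset ρ P) L → ∀ h, 1 ≤ h → h ≤ H →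
      (∀ s, kerV H R K π (h + 1) s ≤ kerV H R L π (h + 1) s) →
      ∀ s a, kerQ H R K π h s a ≤ kerQ H R L π h s a := by
    intro L hL h h1 h2 hV s a
    have hLh := hL h s a h1 h2
    have := (hmin h s a h1 h2 _ hLh).trans (Eexp_mono hLh.1 hV)
    unfold kerQ
    linarith
  have hV : ∀ L, Admissible H (TVset ρ P) L → ∀ k h, 1 ≤ h → H + 1 ≤ h + k →
      ∀ s, kerV H R K π h s ≤ kerV H R L π h s := by
    intro L hL k
    induction k with
    | zero =>
      intro h _ hh s
      rw [kerV_terminal _ _ _ _ (by omega), kerV_terminal _ _ _ _ (by omega)]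
    | succ k ih =>
      intro h h1 hh s
      by_cases h2 : h ≤ H
      · rw [kerV_step _ _ _ _ h2, kerV_step _ _ _ _ h2]
        exact Eexp_mono (hπ h s h1 h2)
          (hQstep L hL h h1 h2 (ih (h + 1) (by omega) (by omega)) s)
      · rw [kerV_terminal _ _ _ _ (by omega), kerV_terminal _ _ _ _ (by omega)]
  refine ⟨K, hK, hmin, fun h s a h1 h2 => ?_, fun h s h1 h2 => ?_⟩
  · refine IsLeast.csInf_eq ⟨⟨K, hK, rfl⟩, ?_⟩
    rintro x ⟨L, hL, rfl⟩
    exact hQstep L hL h h1 h2 (hV L hL H (h + 1) (by omega) (by omega)) s a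
  · refine IsLeast.csInf_eq ⟨⟨K, hK, rfl⟩, ?_⟩
    rintro x ⟨L, hL, rfl⟩
    exact hV L hL H h h1 (by omega) s

lemma kerQ_mem_horizon (H : ℕ) {R : ℕ → S → A → ℝ}
    (hR : ∀ h s a, 1 ≤ h → h ≤ H → 0 ≤ R h s a ∧ R h s a ≤ 1)
    {K : ℕ → S → A → S → ℝ} (hK : ∀ h s a, 1 ≤ h → h ≤ H → IsDist (K h s a))
    {π : ℕ → S → A → ℝ} {h k : ℕ} (h1 : 1 ≤ h) (h2 : h ≤ H)
    (hV : ∀ s, 0 ≤ kerV H R K π (h + 1) s ∧ kerV H R K π (h + 1) s ≤ k) (s : S) (a : A) :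
    0 ≤ kerQ H R K π h s a ∧ kerQ H R K π h s a ≤ (k + 1 : ℕ) := by
  have hr := hR h s a h1 h2
  have hl := le_Eexp (hK h s a h1 h2) fun t => (hV t).1
  have hu := Eexp_le (hK h s a h1 h2) fun t => (hV t).2
  unfold kerQ
  push_cast
  exact ⟨by linarith, by linarith⟩

lemma kerV_mem_horizon (H : ℕ) {R : ℕ → S → A → ℝ}
    (hR : ∀ h s a, 1 ≤ h → h ≤ H → 0 ≤ R h s a ∧ R h s a ≤ 1)
    {K : ℕ → S → A → S → ℝ} (hK : ∀ h s a, 1 ≤ h → h ≤ H → IsDist (K h s a))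
    {π : ℕ → S → A → ℝ} (hπ : IsPolicy H π) (k : ℕ) : ∀ h, 1 ≤ h → H + 1 ≤ h + k →
    ∀ s, 0 ≤ kerV H R K π h s ∧ kerV H R K π h s ≤ k := by
  induction k with
  | zero =>
    intro h _ hh s
    rw [kerV_terminal _ _ _ _ (by omega)]
    simp
  | succ k ih =>
    intro h h1 hh s
    by_cases h2 : h ≤ H
    · have hQ := kerQ_mem_horizon H hR hK h1 h2 (ih (h + 1) (by omega) (by omega)) s
      rw [kerV_step _ _ _ _ h2]
      exact ⟨le_Eexp (hπ h s h1 h2) fun a => (hQ a).1, Eexp_le (hπ h s h1 h2) fun a => (hQ a).2⟩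
    · rw [kerV_terminal _ _ _ _ (by omega)]
      exact ⟨le_rfl, by positivity⟩

/-- The contraction step: if `V_{h+1}` oscillates by at most `1/ρ`, so does `Q_h`. -/
lemma kerQ_mem_band [Nonempty S] {H : ℕ} {ρ : ℝ} (hρ0 : 0 < ρ) (hρ1 : ρ < 1)
    {R : ℕ → S → A → ℝ} (hR : ∀ h s a, 1 ≤ h → h ≤ H → 0 ≤ R h s a ∧ R h s a ≤ 1)
    {P : ℕ → S → A → S → ℝ} (hP : ∀ h s a, 1 ≤ h → h ≤ H → IsDist (P h s a))
    {π : ℕ → S → A → ℝ} {K : ℕ → S → A → S → ℝ} (hK : Admissible H (TVset ρ P) K)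
    (hmin : ∀ h s a, 1 ≤ h → h ≤ H → ∀ q ∈ TVset ρ P h s a,
      Eexp (K h s a) (kerV H R K π (h + 1)) ≤ Eexp q (kerV H R K π (h + 1)))
    {h : ℕ} (h1 : 1 ≤ h) (h2 : h ≤ H)
    (hV : ∃ l, ∀ s, l ≤ kerV H R K π (h + 1) s ∧ kerV H R K π (h + 1) s ≤ l + 1 / ρ) :
    ∃ m, ∀ s a, m ≤ kerQ H R K π h s a ∧ kerQ H R K π h s a ≤ m + 1 / ρ := by
  obtain ⟨l, hl⟩ := hV
  obtain ⟨s₀, hs₀⟩ := Finite.exists_min (kerV H R K π (h + 1))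
  refine ⟨kerV H R K π (h + 1) s₀, fun s a => ?_⟩
  have hr := hR h s a h1 h2
  have hlow := le_Eexp (hK h s a h1 h2).1 hs₀
  obtain ⟨p, hp, hpe⟩ := exists_mixture hρ0.le hρ1.le (hP h s a h1 h2)
    (kerV H R K π (h + 1)) s₀
  have hup := hmin h s a h1 h2 p hp
  have hPu : Eexp (P h s a) (kerV H R K π (h + 1)) ≤ kerV H R K π (h + 1) s₀ + 1 / ρ :=
    Eexp_le (hP h s a h1 h2) fun t => by linarith [(hl t).2, (hl s₀).1]
  have hmul := mul_le_mul_of_nonneg_left hPu (sub_nonneg.2 hρ1.le)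
  have hinv : ρ * (1 / ρ) = 1 := mul_one_div_cancel hρ0.ne'
  unfold kerQ
  exact ⟨by linarith, by linarith⟩

lemma kerV_mem_band [Nonempty S] {H : ℕ} {ρ : ℝ} (hρ0 : 0 < ρ) (hρ1 : ρ < 1)
    {R : ℕ → S → A → ℝ} (hR : ∀ h s a, 1 ≤ h → h ≤ H → 0 ≤ R h s a ∧ R h s a ≤ 1)
    {P : ℕ → S → A → S → ℝ} (hP : ∀ h s a, 1 ≤ h → h ≤ H → IsDist (P h s a))
    {π : ℕ → S → A → ℝ} (hπ : IsPolicy H π)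
    {K : ℕ → S → A → S → ℝ} (hK : Admissible H (TVset ρ P) K)
    (hmin : ∀ h s a, 1 ≤ h → h ≤ H → ∀ q ∈ TVset ρ P h s a,
      Eexp (K h s a) (kerV H R K π (h + 1)) ≤ Eexp q (kerV H R K π (h + 1)))
    (k : ℕ) : ∀ h, 1 ≤ h → H + 1 ≤ h + k →
    ∃ l, ∀ s, l ≤ kerV H R K π h s ∧ kerV H R K π h s ≤ l + 1 / ρ := by
  have hterm : ∀ h, H + 1 ≤ h →
      ∃ l, ∀ s, l ≤ kerV H R K π h s ∧ kerV H R K π h s ≤ l + 1 / ρ := by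
    intro h hh
    refine ⟨0, fun s => ?_⟩
    rw [kerV_terminal _ _ _ _ hh]
    exact ⟨le_rfl, by positivity⟩
  induction k with
  | zero => exact fun h _ hh => hterm h hh
  | succ k ih =>
    intro h h1 hh
    by_cases h2 : h ≤ H
    · obtain ⟨m, hm⟩ := kerQ_mem_band hρ0 hρ1 hR hP hK hmin h1 h2
        (ih (h + 1) (by omega) (by omega))
      refine ⟨m, fun s => ?_⟩
      rw [kerV_step _ _ _ _ h2]
      exact ⟨le_Eexp (hπ h s h1 h2) fun a => (hm s a).1,
        Eexp_le (hπ h s h1 h2) fun a => (hm s a).2⟩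
    · exact hterm h (by omega)

lemma iSup_sub_iInf_le {ι : Type*} [Nonempty ι] {f : ι → ℝ} {l c : ℝ}
    (hf : ∀ i, l ≤ f i ∧ f i ≤ l + c) : (⨆ i, f i) - (⨅ i, f i) ≤ c := by
  have h1 : (⨆ i, f i) ≤ l + c := ciSup_le fun i => (hf i).2
  have h2 : l ≤ ⨅ i, f i := le_ciInf fun i => (hf i).1
  linarith

end RMDPProof

/-- **Gap between maximum and minimum of robust values for TV robust sets.** For an RMDP
whose robust sets are TV robust sets of radius `ρ ∈ (0,1)`, for every Markov policy `π` and
every step `h ∈ {1,…,H}`, the gaps `max Q^π_h - min Q^π_h` and `max V^π_h - min V^π_h` are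
bounded by `min {H, 1/ρ}`. -/
theorem tv_robust_gap {S A : Type*} [Fintype S] [Fintype A] [Nonempty S] [Nonempty A]
    (H : ℕ) (hH : 1 ≤ H) (ρ : ℝ) (hρ0 : 0 < ρ) (hρ1 : ρ < 1)
    (R : ℕ → S → A → ℝ) (hR : ∀ h s a, 1 ≤ h → h ≤ H → 0 ≤ R h s a ∧ R h s a ≤ 1)
    (P : ℕ → S → A → S → ℝ) (hP : ∀ h s a, 1 ≤ h → h ≤ H → IsDist (P h s a))
    (π : ℕ → S → A → ℝ) (hπ : IsPolicy H π) :
    ∀ h, 1 ≤ h → h ≤ H →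
      (⨆ p : S × A, robQ H R (TVset ρ P) π h p.1 p.2)
          - (⨅ p : S × A, robQ H R (TVset ρ P) π h p.1 p.2) ≤ min (H : ℝ) (1 / ρ) ∧
      (⨆ s : S, robV H R (TVset ρ P) π h s)
          - (⨅ s : S, robV H R (TVset ρ P) π h s) ≤ min (H : ℝ) (1 / ρ) := by
  intro h h1 h2
  obtain ⟨K, hK, hmin, hQeq, hVeq⟩ := exists_worst H hρ0.le R hP hπ
  have hKd : ∀ h s a, 1 ≤ h → h ≤ H → IsDist (K h s a) := fun h s a h1 h2 => (hK h s a h1 h2).1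
  obtain ⟨n, rfl⟩ : ∃ n, H = n + 1 := ⟨H - 1, by omega⟩
  have hVn := kerV_mem_horizon _ hR hKd hπ n (h + 1) (by omega) (by omega)
  have hVH := kerV_mem_horizon _ hR hKd hπ (n + 1) h h1 (by omega)
  obtain ⟨m, hm⟩ := kerQ_mem_band hρ0 hρ1 hR hP hK hmin h1 h2
    (kerV_mem_band hρ0 hρ1 hR hP hπ hK hmin n (h + 1) (by omega) (by omega))
  obtain ⟨l, hl⟩ := kerV_mem_band hρ0 hρ1 hR hP hπ hK hmin (n + 1) h h1 (by omega)
  simp only [hQeq h _ _ h1 h2, hVeq h _ h1 h2]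
  refine ⟨le_min (iSup_sub_iInf_le (l := 0) fun p => ?_) (iSup_sub_iInf_le fun p => hm p.1 p.2),
    le_min (iSup_sub_iInf_le (l := 0) fun s => ?_) (iSup_sub_iInf_le hl)⟩
  · rw [zero_add]
    exact kerQ_mem_horizon _ hR hKd h1 h2 hVn p.1 p.2
  · rw [zero_add]
    exact hVH s
end

section
/- (Explicit robust values in the hard example.) Fix θ ∈ {0,1} and consider the RMDP M_θ defined in the context, with 0 < q < p < 1 and TV robust sets of radius ρ ∈ [0, q]. Then for every Markov policy π: V^π_1(s_good) = 1 + (1−ρ)(2−ρ) + ρ·( π_2(θ|s_bad)·(p−ρ) + π_2(1−θ|s_bad)·(q−ρ) ). Consequently, the optimal robust value is V*_1(s_good) = 1 + (1−ρ)(2−ρ) + ρ·(p−ρ), and for every Markov policy π: V*_1(s_good) − V^π_1(s_good) = ρ·(p−q)·π_2(1−θ|s_bad). -/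
/-!
The rewards depend only on the state, so under any kernels `V_3` is `1` at the good state and `0`
at the bad one, and `V_1(s_good)` is an explicit polynomial in the probabilities of moving to the
good state (`kerV_hard`). A TV constraint of radius `ρ` on two points says that this probability
differs from its nominal value by at most `ρ`. `V_2` is monotone in these
probabilities, and for the smallest of them `V_2(s_good) = 2 - ρ ≥ 1 ≥ V_2(s_bad)`, so moving as much
mass as allowed to the bad state is optimal for the adversary at steps 1 and 2. This gives the lower
bound `lower_bound_hard`, and `worstKer` attains it, so the robust value is a minimum
(`robV_hard`). The value is affine in `π_2(·|s_bad)` and is maximised by always playing `θ`.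
-/

open Finset

/-- Rewards of the hard example: `1` at the good state (`true`), `0` at the bad state
(`false`), at every step and action. -/
noncomputable def hardR : ℕ → Bool → Bool → ℝ := fun _ s _ => if s = true then 1 else 0

/-- Nominal kernels of the hard example `M_θ`: the good state is absorbing, the bad state
is absorbing at step 1, and at step 2 the bad state transits to the good state with
probability `p` when `a = θ` and with probability `q` when `a = 1 - θ`. -/
noncomputable def hardP (θ : Bool) (p q : ℝ) : ℕ → Bool → Bool → Bool → ℝ :=
  fun h s a s' =>
    if h = 2 ∧ s = false then
      (if a = θ then (if s' = true then p else 1 - p)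
       else (if s' = true then q else 1 - q))
    else if s' = s then 1 else 0

/-- The probability distribution on `Bool` giving mass `g` to the good state. -/
noncomputable def twoPoint (g : ℝ) : Bool → ℝ := fun s' => if s' = true then g else 1 - g

/-- The adversary's optimal kernels: mass `ρ` is moved from the good to the bad state wherever the
nominal kernel gives the good state positive mass. -/
noncomputable def worstKer (θ : Bool) (p q ρ : ℝ) : ℕ → Bool → Bool → Bool → ℝ :=
  fun h s a => twoPoint
    (if s = true then 1 - ρ
     else if h = 2 then (if a = θ then p - ρ else q - ρ)
     else 0)

/-- Closed form of `V_1(s_good)` under an arbitrary kernel collection. -/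
lemma kerV_hard (Pk : ℕ → Bool → Bool → Bool → ℝ) (π : ℕ → Bool → Bool → ℝ)
    (hπ : IsPolicy 3 π) :
    kerV 3 hardR Pk π 1 true = ∑ a, π 1 true a * (1 +
      (Pk 1 true a true * (∑ b, π 2 true b * (1 + Pk 2 true b true)) +
       Pk 1 true a false * (∑ b, π 2 false b * Pk 2 false b true))) := by
  have h4 : ∀ s, kerV 3 hardR Pk π 4 s = 0 := by
    intro s; rw [kerV]; simp
  have h3 : ∀ s, kerV 3 hardR Pk π 3 s = if s = true then 1 else 0 := by
    intro s
    have h := (hπ 3 s (by norm_num) (by norm_num)).2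
    rw [kerV]
    rw [Fintype.sum_bool] at h
    cases s <;> simp [Eexp, h4, hardR, h]
  have h2 : ∀ s, kerV 3 hardR Pk π 2 s =
      ∑ b, π 2 s b * ((if s = true then 1 else 0) + Pk 2 s b true) := by
    intro s
    rw [kerV]
    simp [Eexp, h3, hardR]
  rw [kerV]
  simp [Eexp, h2, hardR]

/-- On two points, a TV bound is a bound on the mass of the good state; only its lower half
matters for the adversary. -/
lemma good_mass_ge {P : ℕ → Bool → Bool → Bool → ℝ} {ρ : ℝ} {h : ℕ} {s a : Bool} {Pt : Bool → ℝ}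
    (hP : P h s a true + P h s a false = 1) (hPt : Pt ∈ TVset ρ P h s a) :
    P h s a true - ρ ≤ Pt true := by
  obtain ⟨⟨-, hsum⟩, htv⟩ := hPt
  rw [Fintype.sum_bool] at hsum
  rw [TV, Fintype.sum_bool] at htv
  have h1 := neg_abs_le (Pt true - P h s a true)
  have h2 := le_abs_self (Pt false - P h s a false)
  linarith

lemma hardP_sum (θ : Bool) (p q : ℝ) (h : ℕ) (s a : Bool) :
    hardP θ p q h s a true + hardP θ p q h s a false = 1 := by
  unfold hardP
  split_ifs <;> simp_all

lemma sum_policy (f : Bool → ℝ) (θ : Bool) : ∑ b, f b = f θ + f (!θ) := by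
  cases θ <;> simp [add_comm]

lemma lower_bound_hard (θ : Bool) (p q ρ : ℝ)
    (hqp : q < p) (hp1 : p < 1) (hρ0 : 0 ≤ ρ) (hρq : ρ ≤ q)
    (π : ℕ → Bool → Bool → ℝ) (hπ : IsPolicy 3 π) (Pk : ℕ → Bool → Bool → Bool → ℝ)
    (hPk : Admissible 3 (TVset ρ (hardP θ p q)) Pk) :
    1 + (1 - ρ) * (2 - ρ) + ρ * (π 2 false θ * (p - ρ) + π 2 false (!θ) * (q - ρ))
      ≤ kerV 3 hardR Pk π 1 true := by
  rw [kerV_hard Pk π hπ]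
  obtain ⟨hn1, hs1⟩ := hπ 1 true (by norm_num) (by norm_num)
  obtain ⟨hng, hsg⟩ := hπ 2 true (by norm_num) (by norm_num)
  obtain ⟨hnb, hsb⟩ := hπ 2 false (by norm_num) (by norm_num)
  have hgood : ∀ b, 1 - ρ ≤ Pk 2 true b true := fun b => by
    have := good_mass_ge (hardP_sum θ p q 2 true b) (hPk 2 true b (by norm_num) (by norm_num))
    simpa [hardP] using this
  have hfirst : ∀ a, 1 - ρ ≤ Pk 1 true a true := fun b => by
    have := good_mass_ge (hardP_sum θ p q 1 true b) (hPk 1 true b (by norm_num) (by norm_num))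
    simpa [hardP] using this
  have hbadθ : p - ρ ≤ Pk 2 false θ true := by
    have := good_mass_ge (hardP_sum θ p q 2 false θ) (hPk 2 false θ (by norm_num) (by norm_num))
    simpa [hardP] using this
  have hbadn : q - ρ ≤ Pk 2 false (!θ) true := by
    have := good_mass_ge (hardP_sum θ p q 2 false (!θ))
      (hPk 2 false (!θ) (by norm_num) (by norm_num))
    simpa [hardP] using this
  have hVg : 2 - ρ ≤ ∑ b, π 2 true b * (1 + Pk 2 true b true) := by
    calc 2 - ρ = ∑ b, π 2 true b * (2 - ρ) := by rw [← Finset.sum_mul, hsg, one_mul]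
      _ ≤ _ := Finset.sum_le_sum fun b _ =>
        mul_le_mul_of_nonneg_left (by linarith [hgood b]) (hng b)
  have hVb : π 2 false θ * (p - ρ) + π 2 false (!θ) * (q - ρ)
      ≤ ∑ b, π 2 false b * Pk 2 false b true := by
    rw [sum_policy _ θ]
    exact add_le_add (mul_le_mul_of_nonneg_left hbadθ (hnb _))
      (mul_le_mul_of_nonneg_left hbadn (hnb _))
  -- The bad state's worst value is at most `1`, below the good state's `2 - ρ`.
  have hx : π 2 false θ * (p - ρ) + π 2 false (!θ) * (q - ρ) ≤ 1 := by
    rw [sum_policy _ θ] at hsb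
    nlinarith [hnb θ, hnb (!θ)]
  generalize (∑ b, π 2 true b * (1 + Pk 2 true b true)) = Vg at *
  generalize (∑ b, π 2 false b * Pk 2 false b true) = Vb at *
  generalize π 2 false θ * (p - ρ) + π 2 false (!θ) * (q - ρ) = x at *
  have key : ∀ a, 1 + (1 - ρ) * (2 - ρ) + ρ * x
      ≤ 1 + (Pk 1 true a true * Vg + Pk 1 true a false * Vb) := fun a => by
    obtain ⟨hnn, hsum⟩ := (hPk 1 true a (by norm_num) (by norm_num)).1
    rw [Fintype.sum_bool] at hsum
    have e1 := mul_le_mul_of_nonneg_left hVg (hnn true)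
    have e2 := mul_le_mul_of_nonneg_left hVb (hnn false)
    have e3 : 0 ≤ (Pk 1 true a true - (1 - ρ)) * (2 - ρ - x) :=
      mul_nonneg (by linarith [hfirst a]) (by linarith)
    have e4 : Pk 1 true a false = 1 - Pk 1 true a true := by linarith
    rw [e4] at e2 ⊢
    linarith
  calc _ = ∑ a, π 1 true a * (1 + (1 - ρ) * (2 - ρ) + ρ * x) := by
        rw [← Finset.sum_mul, hs1, one_mul]
    _ ≤ _ := Finset.sum_le_sum fun a _ => mul_le_mul_of_nonneg_left (key a) (hn1 a)

lemma worstKer_admissible (θ : Bool) (p q ρ : ℝ)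
    (hqp : q < p) (hp1 : p < 1) (hρ0 : 0 ≤ ρ) (hρq : ρ ≤ q) :
    Admissible 3 (TVset ρ (hardP θ p q)) (worstKer θ p q ρ) := by
  intro h s a _ _
  refine ⟨⟨fun s' => ?_, by simp [worstKer, twoPoint]⟩, ?_⟩
  · unfold worstKer twoPoint
    split_ifs <;> linarith
  · have habs : |ρ| = ρ := abs_of_nonneg hρ0
    rw [TV, Fintype.sum_bool]
    by_cases h2 : h = 2 <;> by_cases ha : a = θ <;> cases s <;>
      simp [worstKer, twoPoint, hardP, h2, ha, habs, hρ0]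

lemma robV_hard (θ : Bool) (p q ρ : ℝ)
    (hqp : q < p) (hp1 : p < 1) (hρ0 : 0 ≤ ρ) (hρq : ρ ≤ q)
    (π : ℕ → Bool → Bool → ℝ) (hπ : IsPolicy 3 π) :
    robV 3 hardR (TVset ρ (hardP θ p q)) π 1 true
      = 1 + (1 - ρ) * (2 - ρ)
          + ρ * (π 2 false θ * (p - ρ) + π 2 false (!θ) * (q - ρ)) := by
  refine IsLeast.csInf_eq ⟨⟨worstKer θ p q ρ, worstKer_admissible θ p q ρ hqp hp1 hρ0 hρq, ?_⟩, ?_⟩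
  · obtain ⟨-, hs1⟩ := hπ 1 true (by norm_num) (by norm_num)
    obtain ⟨-, hsg⟩ := hπ 2 true (by norm_num) (by norm_num)
    rw [kerV_hard _ π hπ, sum_policy (fun b => π 2 false b * _) θ]
    simp only [worstKer, twoPoint, if_true, ← Finset.sum_mul, hs1, hsg]
    simp
    ring
  · rintro x ⟨Pk, hPk, rfl⟩
    exact lower_bound_hard θ p q ρ hqp hp1 hρ0 hρq π hπ Pk hPk

lemma optV_hard (θ : Bool) (p q ρ : ℝ)
    (hqp : q < p) (hp1 : p < 1) (hρ0 : 0 ≤ ρ) (hρq : ρ ≤ q) :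
    optV 3 hardR (TVset ρ (hardP θ p q)) 1 true = 1 + (1 - ρ) * (2 - ρ) + ρ * (p - ρ) := by
  have hpol : IsPolicy 3 (detPol fun (_ : ℕ) (_ : Bool) => θ) := by
    intro h s _ _
    refine ⟨fun a => ?_, by cases θ <;> simp [detPol]⟩
    unfold detPol
    split_ifs <;> norm_num
  refine IsGreatest.csSup_eq ⟨⟨detPol fun _ _ => θ, hpol, ?_⟩, ?_⟩
  · rw [robV_hard θ p q ρ hqp hp1 hρ0 hρq _ hpol]
    simp [detPol]
  · rintro x ⟨π, hπ, rfl⟩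
    rw [robV_hard θ p q ρ hqp hp1 hρ0 hρq π hπ]
    obtain ⟨hnb, hsb⟩ := hπ 2 false (by norm_num) (by norm_num)
    rw [sum_policy _ θ] at hsb
    have : π 2 false θ * (p - ρ) + π 2 false (!θ) * (q - ρ) ≤ p - ρ := by
      nlinarith [hnb (!θ)]
    linarith [mul_le_mul_of_nonneg_left this hρ0]

/-- **Explicit robust values in the hard example.** For `M_θ` with `0 < q < p < 1`, TV robust
sets of radius `ρ ∈ [0,q]`, and any Markov policy `π`:
`V^π_1(s_good) = 1 + (1-ρ)(2-ρ) + ρ(π_2(θ|s_bad)(p-ρ) + π_2(1-θ|s_bad)(q-ρ))`,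
`V*_1(s_good) = 1 + (1-ρ)(2-ρ) + ρ(p-ρ)`, and
`V*_1(s_good) - V^π_1(s_good) = ρ(p-q)·π_2(1-θ|s_bad)`. -/
theorem hard_example_values (θ : Bool) (p q ρ : ℝ)
    (hq0 : 0 < q) (hqp : q < p) (hp1 : p < 1) (hρ0 : 0 ≤ ρ) (hρq : ρ ≤ q)
    (π : ℕ → Bool → Bool → ℝ) (hπ : IsPolicy 3 π) :
    robV 3 hardR (TVset ρ (hardP θ p q)) π 1 true
        = 1 + (1 - ρ) * (2 - ρ)
            + ρ * (π 2 false θ * (p - ρ) + π 2 false (!θ) * (q - ρ)) ∧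
    optV 3 hardR (TVset ρ (hardP θ p q)) 1 true = 1 + (1 - ρ) * (2 - ρ) + ρ * (p - ρ) ∧
    optV 3 hardR (TVset ρ (hardP θ p q)) 1 true
        - robV 3 hardR (TVset ρ (hardP θ p q)) π 1 true
      = ρ * (p - q) * π 2 false (!θ) := by
  have hr := robV_hard θ p q ρ hqp hp1 hρ0 hρq π hπ
  have ho := optV_hard θ p q ρ hqp hp1 hρ0 hρq
  refine ⟨hr, ho, ?_⟩
  obtain ⟨-, hsb⟩ := hπ 2 false (by norm_num) (by norm_num)
  rw [sum_policy _ θ] at hsb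
  have e : π 2 false θ = 1 - π 2 false (!θ) := by linarith
  rw [hr, ho, e]
  ring
end
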